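/- In the RRM setting, suppose additionally that C_log is star-shaped about the origin, i.e., αY ∈ C_log for all α ∈ (0,1) and Y ∈ C_log. Then the associated MARM ρ is star-shaped (ρ(αY) ≤ αρ(Y) for all α ∈ (0,1), Y ∈ C_log, extended-real arithmetic) if and only if the MARRM η is log-star-shaped: η(X^α) ≤ η(X)^α for all α ∈ (0,1) and X ∈ C (powers in [0,∞]). -/

import Mathlib

open MeasureTheory Filter Set ENNReal

/-- The set of strictly positive random variables (positive representatives of
elements of `L⁰₊₊`). -/
def L0pos (Ω : Type*) : Set (Ω → ℝ) := {X | ∀ ω, 0 < X ω}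

/-- The multi-asset return risk measure (MARRM) associated with the security set `S`,
the relative acceptance set `B` and the pricing map `π`:
`η(X) = inf {π(Z) : Z ∈ S, X/Z ∈ B}`, with `inf ∅ = ∞`. -/
noncomputable def marrm {Ω : Type*} (S B : Set (Ω → ℝ)) (π : (Ω → ℝ) → ℝ) (X : Ω → ℝ) : ℝ≥0∞ :=
  sInf ((fun Z => ENNReal.ofReal (π Z)) '' {Z | Z ∈ S ∧ (fun ω => X ω / Z ω) ∈ B})

/-- `L^∞₊₊`: strictly positive, (essentially) bounded random variables. -/
def LinftyPos {Ω : Type*} [MeasurableSpace Ω] (P : Measure Ω) : Set (Ω → ℝ) :=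
  {X | (∀ ω, 0 < X ω) ∧ ∃ c : ℝ, ∀ᵐ ω ∂P, X ω ≤ c}

/-- The image of a set of random variables under the pointwise logarithm,
e.g. `C_log = {log X : X ∈ C}`. -/
def logIm {Ω : Type*} (A : Set (Ω → ℝ)) : Set (Ω → ℝ) :=
  (fun X => fun ω => Real.log (X ω)) '' A

/-- The multi-asset risk measure (MARM) with security set `Slog`, acceptance set `Anu`
and pricing map `πlog`: `ρ(Y) = inf {πlog(L) : L ∈ Slog, Y - L ∈ Anu}`, with
values in `[-∞,∞]` and `inf ∅ = +∞`. -/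
noncomputable def marm {Ω : Type*} (Slog Anu : Set (Ω → ℝ)) (πlog : (Ω → ℝ) → ℝ)
    (Y : Ω → ℝ) : EReal :=
  sInf ((fun L => (πlog L : EReal)) '' {L | L ∈ Slog ∧ (fun ω => Y ω - L ω) ∈ Anu})

/-- The relative acceptance set `B_ρ̃ = {X ∈ K : ρ̃(X) ≤ 1}` induced by a
return risk measure `ρt` on `K`. -/
def rrmAccept {Ω : Type*} (K : Set (Ω → ℝ)) (ρt : (Ω → ℝ) → ℝ) : Set (Ω → ℝ) :=
  {X | X ∈ K ∧ ρt X ≤ 1}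

/-- The MARM associated with a return risk measurement regime `(B_ρ̃, S, π)` in the
RRM setting: security set `S_log`, acceptance set `A_ν = {Y ∈ K_log : ν(Y) ≤ 0}` with
`ν = log ∘ ρ̃ ∘ exp`, and pricing map `π_log = log ∘ π ∘ exp`. -/
noncomputable def marmOf {Ω : Type*} (S K : Set (Ω → ℝ)) (π ρt : (Ω → ℝ) → ℝ) :
    (Ω → ℝ) → EReal :=
  marm (logIm S) {L | L ∈ logIm K ∧ Real.log (ρt (fun ω => Real.exp (L ω))) ≤ 0}
    (fun L => Real.log (π (fun ω => Real.exp (L ω))))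

theorem marmOf_log_eq {Ω : Type*} (S K : Set (Ω → ℝ)) (π ρt : (Ω → ℝ) → ℝ)
    (hSpos : S ⊆ L0pos Ω) (hπpos : ∀ Z ∈ S, 0 < π Z) (hKpos : K ⊆ L0pos Ω)
    (hρpos : ∀ X ∈ K, 0 < ρt X) (X : Ω → ℝ) (hX : X ∈ L0pos Ω) :
    marmOf S K π ρt (fun ω => Real.log (X ω))
      = ENNReal.log (marrm S (rrmAccept K ρt) π X) := by
  have hexp : ∀ Z ∈ L0pos Ω, (fun ω => Real.exp (Real.log (Z ω))) = Z := by
    intro Z hZ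
    funext ω
    exact Real.exp_log (hZ ω)
  have hdiv : ∀ Z ∈ L0pos Ω, (fun ω => Real.log (X ω) - Real.log (Z ω))
      = (fun ω => Real.log (X ω / Z ω)) := by
    intro Z hZ
    funext ω
    rw [Real.log_div (hX ω).ne' (hZ ω).ne']
  have hdpos : ∀ Z ∈ L0pos Ω, (fun ω => X ω / Z ω) ∈ L0pos Ω := by
    intro Z hZ ω
    exact div_pos (hX ω) (hZ ω)
  unfold marmOf marm marrm
  rw [← ENNReal.logOrderIso_apply, OrderIso.map_sInf, ← sInf_image, Set.image_image]
  congr 1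
  ext r
  simp only [Set.mem_image, Set.mem_setOf_eq, ENNReal.logOrderIso_apply]
  constructor
  · rintro ⟨L, ⟨⟨Z, hZ, rfl⟩, ⟨W, hW, hWe⟩, hle⟩, rfl⟩
    have hZp := hSpos hZ
    have hWX : W = fun ω => X ω / Z ω := by
      rw [← hexp W (hKpos hW), ← hexp _ (hdpos Z hZp)]
      funext ω
      have h1 := congrFun hWe ω
      have h2 := congrFun (hdiv Z hZp) ω
      simp only at h1 h2
      rw [h1, h2]
    refine ⟨Z, ⟨hZ, hWX ▸ hW, ?_⟩, ?_⟩
    · have h5 : (fun ω => Real.exp (Real.log (X ω) - Real.log (Z ω))) = W := by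
        rw [← hexp W (hKpos hW)]
        funext ω
        exact congrArg Real.exp (congrFun hWe ω).symm
      rw [h5] at hle
      rw [← hWX]
      exact (Real.log_nonpos_iff (hρpos W hW).le).1 hle
    · rw [hexp Z hZp, ENNReal.log_ofReal_of_pos (hπpos Z hZ)]
  · rintro ⟨Z, ⟨hZ, hK, hle⟩, rfl⟩
    have hZp := hSpos hZ
    refine ⟨fun ω => Real.log (Z ω), ⟨⟨Z, hZ, rfl⟩, ?_, ?_⟩, ?_⟩
    · rw [hdiv Z hZp]
      exact ⟨_, hK, rfl⟩
    · have h2 := hdiv Z hZp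
      have h3 := hexp _ (hdpos Z hZp)
      have h4 : (fun ω => Real.exp (Real.log (X ω) - Real.log (Z ω))) = fun ω => X ω / Z ω := by
        rw [← h3]
        funext ω
        exact congrArg Real.exp (congrFun h2 ω)
      rw [h4]
      exact (Real.log_nonpos_iff (hρpos _ hK).le).2 hle
    · rw [hexp Z hZp, ENNReal.log_ofReal_of_pos (hπpos Z hZ)]

theorem marm_starShaped_iff_marrm_logStarShaped {Ω : Type*} [MeasurableSpace Ω] (P : Measure Ω) [IsProbabilityMeasure P]
    (C S K : Set (Ω → ℝ)) (π ρt : (Ω → ℝ) → ℝ)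
    (hCne : C.Nonempty) (hCpos : C ⊆ L0pos Ω)
    (hSne : S.Nonempty) (hSpos : S ⊆ L0pos Ω)
    (hπpos : ∀ Z ∈ S, 0 < π Z)
    (hKne : K.Nonempty) (hKpos : K ⊆ L0pos Ω)
    (hKcone : ∀ l : ℝ, 0 < l → ∀ X ∈ K, (fun ω => l * X ω) ∈ K)
    (hKinf : LinftyPos P ⊆ K)
    (hcompat : ∀ X ∈ C, ∀ Z ∈ S, (fun ω => X ω / Z ω) ∈ K)
    (hCmul : ∀ X ∈ C, ∀ Y ∈ C, (fun ω => X ω * Y ω) ∈ C)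
    (hCone : (fun _ => (1:ℝ)) ∈ C)
    (hCinv : ∀ X ∈ C, (fun ω => (X ω)⁻¹) ∈ C)
    (hρmono : ∀ X ∈ K, ∀ Y ∈ K, (∀ᵐ ω ∂P, X ω ≤ Y ω) → ρt X ≤ ρt Y)
    (hρhom : ∀ l : ℝ, 0 < l → ∀ X ∈ K, ρt (fun ω => l * X ω) = l * ρt X)
    (hρpos : ∀ X ∈ K, 0 < ρt X)
    (hρone : ρt (fun _ => (1:ℝ)) = 1)
    (hClogstar : ∀ a ∈ Set.Ioo (0:ℝ) 1, ∀ Y ∈ logIm C, (fun ω => a * Y ω) ∈ logIm C) :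
    (∀ a ∈ Set.Ioo (0:ℝ) 1, ∀ Y ∈ logIm C,
        marmOf S K π ρt (fun ω => a * Y ω) ≤ (a : EReal) * marmOf S K π ρt Y)
      ↔ (∀ a ∈ Set.Ioo (0:ℝ) 1, ∀ X ∈ C,
        marrm S (rrmAccept K ρt) π (fun ω => X ω ^ a)
          ≤ marrm S (rrmAccept K ρt) π X ^ a) := by
  have key := marmOf_log_eq S K π ρt hSpos hπpos hKpos hρpos
  have main : ∀ a : ℝ, ∀ X ∈ C,
      (marmOf S K π ρt (fun ω => a * Real.log (X ω))
          ≤ (a : EReal) * marmOf S K π ρt (fun ω => Real.log (X ω))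
        ↔ marrm S (rrmAccept K ρt) π (fun ω => X ω ^ a)
          ≤ marrm S (rrmAccept K ρt) π X ^ a) := by
    intro a X hX
    have hXp := hCpos hX
    have h1 : (fun ω => a * Real.log (X ω)) = fun ω => Real.log (X ω ^ a) := by
      funext ω
      rw [Real.log_rpow (hXp ω)]
    rw [h1, key (fun ω => X ω ^ a) (fun ω => Real.rpow_pos_of_pos (hXp ω) a), key X hXp,
      ← ENNReal.log_rpow, ENNReal.log_le_log_iff]
  constructor
  · intro h a ha X hX
    exact (main a X hX).1 (h a ha _ ⟨X, hX, rfl⟩)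
  · rintro h a ha _ ⟨X, hX, rfl⟩
    exact (main a X hX).2 (h a ha X hX)
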